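/- (Nullity interpretation underlying the multivariate interlace polynomial) Let w be a double occurrence word on n ≥ 1 vertices and let ℓ : {1,…,n} → GF(2) be a loop assignment; let A = I(w) + diag(ℓ). Let A and B be disjoint subsets of {1,…,n}, let ℓ' agree with ℓ off B and have ℓ'(v) = ℓ(v)+1 for v ∈ B (loops toggled on B), and let M be the principal submatrix of I(w) + diag(ℓ') on the rows and columns indexed by A ∪ B. Define the transition assignment t_{A,B} by: t_{A,B}(v) = follow if v ∉ A ∪ B; t_{A,B}(v) = reverse if either (v ∈ A and ℓ(v) = 1) or (v ∈ B and ℓ(v) = 0); and t_{A,B}(v) = cross if either (v ∈ A and ℓ(v) = 0) or (v ∈ B and ℓ(v) = 1). Then ν(M) = |P_{t_{A,B}}| − 1. -/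

import Mathlib

/-!
The circuits of `P_t` partition the `2n` edges `e_p`, so `|P_t|` is the dimension of the space of
functions `x` from edges to `GF(2)` that are constant on circuits.  Such an `x` is described by its
jumps `x(p) - x(p-1)`.  Whatever the transition at a vertex `v` with occurrences `a` and `b`,
constancy on circuits forces the jumps at `a` and `b` to agree; call the common value `y(v)`.
Conversely any `y` integrates to a function on edges, uniquely up to an additive constant, because
the jumps around the whole word add up to `2 ∑ y = 0` (`potential`, `potential_step`,
`eq_potential`).

For `a < b` one has `x(b) - x(a) = y(v) + (I(w) y)(v)`, since the parity of the number of
occurrences of `u` strictly between `a` and `b` is the interlace entry (`potential_between`).  Hence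
constancy on circuits at `v` says `y(v) = 0` for `follow`, `(I(w) y)(v) = 0` for `cross`, and
`(I(w) y)(v) + y(v) = 0` for `reverse` (`vertexCond_iff`).  The solutions `y` form the kernel of
`M`, extended by zero (`finrank_ker_eq`), and the constant of integration contributes one more
dimension, so `|P_t| = 1 + ν(M)` (`finrank_circuits`).

The remaining point is that `τ` has exactly twice as many orbits as there are circuits.  Reversal of
darts conjugates `τ` to its inverse and fixes no orbit (`not_sameCycle_reversal`), so `f ↦ f + f ∘ r`
on the `τ`-invariant functions on darts has kernel and range both equal to the functions on edges
constant on circuits (`orbitCount_eq_two_mul`).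
-/

open scoped Classical

/-- The GF(2)-nullity of a square matrix: number of columns minus rank. -/
noncomputable def nullity {ι : Type*} [Fintype ι] (M : Matrix ι ι (ZMod 2)) : ℕ :=
  Fintype.card ι - M.rank

/-- The setoid on `α` whose classes are the orbits (cycles, including fixed points)
of a permutation. -/
def sameCycleSetoid {α : Type*} (π : Equiv.Perm α) : Setoid α :=
  ⟨π.SameCycle, ⟨fun x => Equiv.Perm.SameCycle.refl π x, fun h => h.symm, fun h h' => h.trans h'⟩⟩

/-- The number of orbits of a permutation (fixed points count as orbits). -/
noncomputable def orbitCount {α : Type*} (π : Equiv.Perm α) : ℕ :=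
  Nat.card (Quotient (sameCycleSetoid π))

/-- A double occurrence word on `n` vertices: a map from the `2n` cyclic positions to the
vertices in which every vertex occurs at exactly two positions. -/
def DoubleOccurrence {n : ℕ} (w : Fin (2 * n) → Fin n) : Prop :=
  ∀ v : Fin n, (Finset.univ.filter fun p => w p = v).card = 2

/-- Distinct vertices `u` and `v` are interlaced in `w` when the two occurrences of `v` lie
in different cyclic arcs determined by the two occurrences of `u`; cutting the cycle at
position `0`, this says that exactly one occurrence of `v` lies strictly between the two
occurrences of `u`. -/
def Interlaced {n : ℕ} (w : Fin (2 * n) → Fin n) (u v : Fin n) : Prop :=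
  u ≠ v ∧ ∀ p q : Fin (2 * n), p < q → w p = u → w q = u →
    (Finset.univ.filter fun r => p < r ∧ r < q ∧ w r = v).card = 1

/-- The interlace matrix of a double occurrence word: the `(u,v)` entry is `1` iff `u ≠ v`
and `u`, `v` are interlaced; the diagonal entries are `0`. -/
noncomputable def interlaceMatrix {n : ℕ} (w : Fin (2 * n) → Fin n) :
    Matrix (Fin n) (Fin n) (ZMod 2) :=
  Matrix.of fun u v => if Interlaced w u v then 1 else 0

/-- A transition at a vertex: follow the word, cross it consistently with its orientation,
or reverse orientation. -/
inductive Transition : Type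
  | follow : Transition
  | cross : Transition
  | reverse : Transition
deriving DecidableEq

/-- The matrix `I_t(w)`: delete the rows/columns of the vertices where `t` is `follow`,
and put diagonal entry `1` at the vertices where `t` is `reverse` (and `0` where `t` is
`cross`); off-diagonal entries record interlacement in `w`. -/
noncomputable def transMatrix {n : ℕ} (w : Fin (2 * n) → Fin n) (t : Fin n → Transition) :
    Matrix {v : Fin n // t v ≠ Transition.follow} {v : Fin n // t v ≠ Transition.follow}
      (ZMod 2) :=
  Matrix.of fun u v =>
    if u = v then (if t u.1 = Transition.reverse then 1 else 0)
    else if Interlaced w u.1 v.1 then 1 else 0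

/-- The position `1` in `Fin (2n)`, for `n ≥ 1`. -/
def pos1 {n : ℕ} (hn : 0 < n) : Fin (2 * n) := ⟨1, by omega⟩

/-- `τ` is the dart permutation determined by the transition assignment `t` on the double
occurrence word `w`: darts are pairs `(p, ε)` with `ε = true` the traversal of the edge
`e_p` from `w(p)` to `w(p+1)` and `ε = false` its reverse, and for each vertex `v`
occurring at positions `a` and `b` the images of the four darts arriving at `v` are as
prescribed by `t v`. -/
def IsDartPerm {n : ℕ} (hn : 0 < n) (w : Fin (2 * n) → Fin n) (t : Fin n → Transition)
    (τ : Equiv.Perm (Fin (2 * n) × Bool)) : Prop :=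
  ∀ (v : Fin n) (a b : Fin (2 * n)), a ≠ b → w a = v → w b = v →
    (t v = Transition.follow →
      τ (a - pos1 hn, true) = (a, true) ∧ τ (b - pos1 hn, true) = (b, true) ∧
      τ (a, false) = (a - pos1 hn, false) ∧ τ (b, false) = (b - pos1 hn, false)) ∧
    (t v = Transition.cross →
      τ (a - pos1 hn, true) = (b, true) ∧ τ (b - pos1 hn, true) = (a, true) ∧
      τ (a, false) = (b - pos1 hn, false) ∧ τ (b, false) = (a - pos1 hn, false)) ∧
    (t v = Transition.reverse →
      τ (a - pos1 hn, true) = (b - pos1 hn, false) ∧ τ (b - pos1 hn, true) = (a - pos1 hn, false) ∧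
      τ (a, false) = (b, true) ∧ τ (b, false) = (a, true))

/-! ### Orbits of a permutation with an orientation-reversing involution -/

/-- Functions `α → GF(2)` invariant under the permutation `τ`. -/
def invFun {α : Type*} (τ : Equiv.Perm α) : Submodule (ZMod 2) (α → ZMod 2) where
  carrier := {f | ∀ d, f (τ d) = f d}
  add_mem' := by
    intro f g hf hg d
    simp only [Set.mem_ofPred_eq] at hf hg
    simp [hf d, hg d]
  zero_mem' := by intro d; rfl
  smul_mem' := by
    intro c f hf d
    simp only [Set.mem_ofPred_eq] at hf
    simp [hf d]

lemma mem_invFun {α : Type*} {τ : Equiv.Perm α} {f : α → ZMod 2} :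
    f ∈ invFun τ ↔ ∀ d, f (τ d) = f d := Iff.rfl

lemma invFun_sameCycle {α : Type*} {τ : Equiv.Perm α} {f : α → ZMod 2}
    (hf : f ∈ invFun τ) {d e : α} (h : τ.SameCycle d e) : f d = f e := by
  obtain ⟨k, rfl⟩ := h
  have hinv : ∀ d, f (τ⁻¹ d) = f d := fun d => by
    have := hf (τ⁻¹ d)
    simpa using this.symm
  induction k using Int.induction_on generalizing d with
  | zero => simp
  | succ i ih =>
    rw [zpow_add, Equiv.Perm.mul_apply, zpow_one, ← ih, hf]
  | pred i ih =>
    rw [zpow_sub, Equiv.Perm.mul_apply, zpow_one, ← ih, hinv]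

lemma finrank_invFun {α : Type*} [Finite α] (τ : Equiv.Perm α) :
    Module.finrank (ZMod 2) (invFun τ) = orbitCount τ := by
  let Q := Quotient (sameCycleSetoid τ)
  have : Finite Q := Quotient.finite _
  have : Fintype Q := Fintype.ofFinite Q
  let L : (Q → ZMod 2) →ₗ[ZMod 2] (α → ZMod 2) :=
    LinearMap.funLeft (ZMod 2) (ZMod 2) (fun d => (Quotient.mk _ d : Q))
  have hL : Function.Injective L :=
    LinearMap.funLeft_injective_of_surjective _ _ _ Quotient.mk_surjective
  have hr : LinearMap.range L = invFun τ := by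
    ext f
    constructor
    · rintro ⟨g, rfl⟩ d
      simp only [L, LinearMap.funLeft_apply]
      congr 1
      exact Quotient.sound (Equiv.Perm.sameCycle_apply_left.2 (Equiv.Perm.SameCycle.refl τ d))
    · intro hf
      refine ⟨Quotient.lift f (fun d e h => invFun_sameCycle hf h), ?_⟩
      ext d
      simp [L, LinearMap.funLeft_apply]
  rw [← hr, LinearMap.finrank_range_of_inj hL, Module.finrank_fintype_fun_eq_card, orbitCount,
    Nat.card_eq_fintype_card]

/-- A dart and its reversal lie in different orbits: otherwise, halving the path joining them
produces a dart that is its own reversal or that is followed by its own reversal. -/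
lemma not_sameCycle_reversal {α : Type*} {τ : Equiv.Perm α} {r : α → α}
    (hrt : ∀ d, τ (r (τ d)) = r d)
    (h0 : ∀ d, r d ≠ d) (h1 : ∀ d, τ d ≠ r d) (d : α) : ¬ τ.SameCycle d (r d) := by
  have hk : ∀ (k : ℤ) (d : α), (τ ^ k) (r ((τ ^ k) d)) = r d := by
    intro k
    induction k using Int.induction_on with
    | zero => simp
    | succ i ih =>
      intro d
      have h : (τ ^ ((i : ℤ) + 1)) d = τ ((τ ^ (i : ℤ)) d) := by
        rw [add_comm, zpow_add, Equiv.Perm.mul_apply, zpow_one]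
      rw [h, zpow_add, Equiv.Perm.mul_apply, zpow_one, hrt, ih]
    | pred i ih =>
      intro d
      have h : (τ ^ (-(i : ℤ) - 1)) d = (τ ^ (-(i : ℤ))) (τ⁻¹ d) := by
        rw [zpow_sub, Equiv.Perm.mul_apply, zpow_one]
      have h' : ∀ e, (τ ^ (-(i : ℤ) - 1)) e = τ⁻¹ ((τ ^ (-(i : ℤ))) e) := by
        intro e
        rw [sub_eq_neg_add, zpow_add, Equiv.Perm.mul_apply, zpow_neg_one]
      rw [h', h, ih, Equiv.Perm.inv_eq_iff_eq]
      have := hrt (τ⁻¹ d)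
      simpa using this.symm
  rintro ⟨k, hd⟩
  obtain ⟨m, rfl | rfl⟩ := Int.even_or_odd' k
  · apply h0 ((τ ^ m) d)
    apply (τ ^ m).injective
    rw [hk, ← Equiv.Perm.mul_apply, ← zpow_add, ← two_mul, hd]
  · apply h1 ((τ ^ m) d)
    apply (τ ^ m).injective
    rw [hk, ← hd, ← Equiv.Perm.mul_apply, ← Equiv.Perm.mul_apply, ← zpow_add_one, ← zpow_add]
    congr 2
    ring

/-- If the reversal `r` conjugates `τ` to its inverse and fixes no orbit of `τ`, the orbits come
in pairs, and the number of pairs is the dimension of the space of functions invariant under both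
`τ` and `r`.  Indeed `f ↦ f + f ∘ r` acts on the `τ`-invariant functions with kernel and range
both equal to that space. -/
lemma orbitCount_eq_two_mul {α : Type*} [Finite α] (τ r : Equiv.Perm α)
    (hr : ∀ d, r (r d) = d) (hrt : ∀ d, τ (r (τ d)) = r d)
    (hns : ∀ d, ¬ τ.SameCycle d (r d)) :
    orbitCount τ = 2 * Module.finrank (ZMod 2) (invFun τ ⊓ invFun r : Submodule _ _) := by
  have hcomp : ∀ f ∈ invFun τ, ∀ d, f (r (τ d)) = f (r d) := by
    intro f hf d
    rw [← hrt d, hf]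
  let L : invFun τ →ₗ[ZMod 2] (α → ZMod 2) :=
    (LinearMap.id + LinearMap.funLeft (ZMod 2) (ZMod 2) r) ∘ₗ (invFun τ).subtype
  have hLa : ∀ f d, L f d = f.1 d + f.1 (r d) := fun f d => rfl
  have hker : (LinearMap.ker L).map (invFun τ).subtype = invFun τ ⊓ invFun r := by
    ext f
    constructor
    · rintro ⟨f, hf, rfl⟩
      refine ⟨f.2, fun d => ?_⟩
      have := congrFun (LinearMap.mem_ker.1 hf) d
      rw [hLa] at this
      exact (CharTwo.add_eq_zero.1 this).symm
    · rintro ⟨hf, hf'⟩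
      refine ⟨⟨f, hf⟩, ?_, rfl⟩
      refine LinearMap.mem_ker.2 (funext fun d => ?_)
      rw [hLa]
      exact CharTwo.add_eq_zero.2 (hf' d).symm
  have hrange : LinearMap.range L = invFun τ ⊓ invFun r := by
    ext f
    constructor
    · rintro ⟨f, rfl⟩
      refine ⟨fun d => ?_, fun d => ?_⟩
      · rw [hLa, hLa, f.2 d, hcomp _ f.2]
      · rw [hLa, hLa, hr, add_comm]
    · rintro ⟨hf, hf'⟩
      -- Enumerating the orbits singles out one orbit from each pair `{O, r O}`.
      have : Finite (Quotient (sameCycleSetoid τ)) := Quotient.finite _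
      obtain ⟨N, ⟨e⟩⟩ := Finite.exists_equiv_fin (Quotient (sameCycleSetoid τ))
      let c : α → Fin N := fun d => e (Quotient.mk _ d)
      have hc : ∀ d d', c d = c d' ↔ τ.SameCycle d d' := by
        intro d d'
        simp only [c, EmbeddingLike.apply_eq_iff_eq]
        exact Quotient.eq (r := sameCycleSetoid τ)
      have hcτ : ∀ d, c (τ d) = c d := fun d =>
        (hc _ _).2 (Equiv.Perm.sameCycle_apply_left.2 (Equiv.Perm.SameCycle.refl τ d))
      have hcr : ∀ d, c (r (τ d)) = c (r d) := fun d => by rw [← hrt d, hcτ]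
      have hcne : ∀ d, c d ≠ c (r d) := fun d h => hns d ((hc _ _).1 h)
      refine ⟨⟨fun d => if c d < c (r d) then f d else 0, fun d => ?_⟩, ?_⟩
      · simp only [hcτ, hcr, hf d]
      · ext d
        rw [hLa]
        simp only [hr, hf' d]
        rcases lt_or_gt_of_ne (hcne d) with h | h
        · simp [h, not_lt.2 h.le]
        · simp [h, not_lt.2 h.le]
  have := LinearMap.finrank_range_add_finrank_ker L
  rw [hrange, finrank_invFun] at this
  rw [← this, two_mul, ← hker, Submodule.finrank_map_subtype_eq]

/-! ### Partial sums along the word -/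

section PartialSum

variable {N : ℕ} (g : Fin N → ZMod 2)

/-- The sum of `g` over the positions before `k`. -/
noncomputable def partialSum (k : ℕ) : ZMod 2 := ∑ q : Fin N, if q.val < k then g q else 0

lemma partialSum_zero : partialSum g 0 = 0 := by simp [partialSum]

lemma partialSum_succ (p : Fin N) : partialSum g (p.val + 1) = partialSum g p.val + g p := by
  have : g p = ∑ q : Fin N, if q = p then g q else 0 := by simp
  rw [this]
  simp only [partialSum]
  rw [← Finset.sum_add_distrib]
  refine Finset.sum_congr rfl fun q _ => ?_
  simp only [Fin.ext_iff]
  rcases lt_trichotomy q.val p.val with h | h | h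
  · simp [h, h.ne, Nat.lt_succ_of_lt h]
  · simp [h]
  · simp [h.ne', not_lt.2 h.le, show ¬ q.val < p.val + 1 by omega]

lemma partialSum_between {a b : Fin N} (hab : a < b) :
    partialSum g (b.val + 1) =
      partialSum g (a.val + 1) + g b + ∑ q with a < q ∧ q < b, g q := by
  have : g b = ∑ q : Fin N, if q = b then g q else 0 := by simp
  rw [this, Finset.sum_filter]
  simp only [partialSum]
  rw [← Finset.sum_add_distrib, ← Finset.sum_add_distrib]
  refine Finset.sum_congr rfl fun q _ => ?_
  simp only [Fin.ext_iff, Fin.lt_def] at *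
  split_ifs <;> first | omega | simp

end PartialSum

/-! ### Double occurrence words -/

lemma exists_occurrences {n : ℕ} {w : Fin (2 * n) → Fin n} (hw : DoubleOccurrence w)
    (v : Fin n) : ∃ a b, a < b ∧ Finset.univ.filter (fun p => w p = v) = {a, b} := by
  obtain ⟨a, b, hne, h⟩ := Finset.card_eq_two.1 (hw v)
  rcases lt_or_gt_of_ne hne with hl | hl
  · exact ⟨a, b, hl, h⟩
  · exact ⟨b, a, hl, by rw [h, Finset.pair_comm]⟩

section Word

variable {n : ℕ} {w : Fin (2 * n) → Fin n} {v : Fin n} {a b : Fin (2 * n)}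

lemma occ_iff (h : Finset.univ.filter (fun p => w p = v) = {a, b}) (p : Fin (2 * n)) :
    w p = v ↔ p = a ∨ p = b := by
  have := Finset.ext_iff.1 h p
  simpa using this

/-- The number of occurrences of `u` strictly between the two occurrences `a < b` of `v` is, modulo
`2`, the interlace matrix entry. -/
lemma card_between (hw : DoubleOccurrence w) (hab : a < b)
    (h : Finset.univ.filter (fun p => w p = v) = {a, b}) (u : Fin n) :
    (((Finset.univ.filter fun q => (a < q ∧ q < b) ∧ w q = u).card : ℕ) : ZMod 2)
      = interlaceMatrix w v u := by
  have hocc := occ_iff h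
  simp only [interlaceMatrix, Matrix.of_apply]
  by_cases huv : v = u
  · subst huv
    have h0 : (Finset.univ.filter fun q => (a < q ∧ q < b) ∧ w q = v) = ∅ := by
      ext q
      simp only [Finset.mem_filter, Finset.mem_univ, true_and, Finset.notMem_empty, iff_false]
      rintro ⟨⟨h1, h2⟩, h3⟩
      rcases (hocc q).1 h3 with rfl | rfl
      · exact lt_irrefl _ h1
      · exact lt_irrefl _ h2
    rw [h0, if_neg (fun hI => hI.1 rfl)]
    simp
  · have hI : Interlaced w v u ↔
        (Finset.univ.filter fun q => (a < q ∧ q < b) ∧ w q = u).card = 1 := by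
      constructor
      · intro hI
        have := hI.2 a b hab ((hocc a).2 (Or.inl rfl)) ((hocc b).2 (Or.inr rfl))
        simpa only [and_assoc] using this
      · intro hc
        refine ⟨huv, fun p q hpq hp hq => ?_⟩
        have : p = a ∧ q = b := by
          rcases (hocc p).1 hp with rfl | rfl <;> rcases (hocc q).1 hq with rfl | rfl
          · exact absurd hpq (lt_irrefl _)
          · exact ⟨rfl, rfl⟩
          · exact absurd hpq (lt_asymm hab)
          · exact absurd hpq (lt_irrefl _)
        rw [this.1, this.2]
        simpa only [and_assoc] using hc
    have hle : (Finset.univ.filter fun q => (a < q ∧ q < b) ∧ w q = u).card ≤ 2 := by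
      refine le_of_le_of_eq ?_ (hw u)
      exact Finset.card_le_card fun q hq => by
        simp only [Finset.mem_filter, Finset.mem_univ, true_and] at hq ⊢
        exact hq.2
    rw [hI]
    generalize (Finset.univ.filter fun q => (a < q ∧ q < b) ∧ w q = u).card = k at hle
    interval_cases k
    · simp
    · simp
    · simpa using (by decide : (2 : ZMod 2) = 0)

lemma sum_between (hw : DoubleOccurrence w) (hab : a < b)
    (h : Finset.univ.filter (fun p => w p = v) = {a, b}) (y : Fin n → ZMod 2) :
    ∑ q with a < q ∧ q < b, y (w q) = ∑ u, interlaceMatrix w v u * y u := by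
  rw [← Finset.sum_fiberwise _ w]
  refine Finset.sum_congr rfl fun u _ => ?_
  rw [← card_between hw hab h, Finset.filter_filter,
    Finset.sum_congr rfl (g := fun _ => y u) (by
      intro q hq
      simp only [Finset.mem_filter] at hq
      rw [hq.2.2])]
  simp

lemma sum_word (hw : DoubleOccurrence w) (y : Fin n → ZMod 2) : ∑ q, y (w q) = 0 := by
  rw [← Finset.sum_fiberwise _ w]
  refine Finset.sum_eq_zero fun u _ => ?_
  rw [Finset.sum_congr rfl (g := fun _ => y u) (by
      intro q hq
      simp only [Finset.mem_filter] at hq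
      rw [hq.2]), Finset.sum_const, hw u, two_smul]
  exact CharTwo.add_self_eq_zero _

/-- The potential on edges with constant `c` and jump `y v` at each passage through `v`. -/
noncomputable def potential (w : Fin (2 * n) → Fin n) (c : ZMod 2) (y : Fin n → ZMod 2)
    (p : Fin (2 * n)) : ZMod 2 := c + partialSum (fun q => y (w q)) (p.val + 1)

lemma val_sub_pos1 (hn : 0 < n) (p : Fin (2 * n)) :
    (p - pos1 hn).val = if p.val = 0 then 2 * n - 1 else p.val - 1 := by
  have hp := p.isLt
  rw [Fin.sub_def]
  simp only [pos1]
  split_ifs with h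
  · rw [h, Nat.mod_eq_of_lt (by omega)]
    omega
  · rw [show 2 * n - 1 + p.val = (p.val - 1) + 2 * n by omega, Nat.add_mod_right,
      Nat.mod_eq_of_lt (by omega)]

/-- The jump condition holds cyclically: across position `0` this uses that every vertex occurs
twice, so that the jumps add up to `0` in `GF(2)`. -/
lemma potential_step (hn : 0 < n) (hw : DoubleOccurrence w) (c : ZMod 2) (y : Fin n → ZMod 2)
    (p : Fin (2 * n)) : potential w c y p = potential w c y (p - pos1 hn) + y (w p) := by
  simp only [potential, val_sub_pos1]
  rw [partialSum_succ]
  split_ifs with h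
  · have : partialSum (fun q => y (w q)) (2 * n - 1 + 1) = 0 := by
      rw [← sum_word hw y, partialSum]
      refine Finset.sum_congr rfl fun q _ => if_pos ?_
      omega
    rw [this, h, partialSum_zero]
    ring
  · rw [Nat.sub_add_cancel (by omega)]
    ring

lemma potential_between (hw : DoubleOccurrence w) (hab : a < b)
    (h : Finset.univ.filter (fun p => w p = v) = {a, b}) (c : ZMod 2) (y : Fin n → ZMod 2) :
    potential w c y b =
      potential w c y a + y v + ∑ u, interlaceMatrix w v u * y u := by
  simp only [potential]
  rw [partialSum_between _ hab, sum_between hw hab h, (occ_iff h b).2 (Or.inr rfl)]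
  ring

/-- A function on edges is recovered from its jumps and its value on the edge before position
`0`. -/
lemma eq_potential (hn : 0 < n) (x : Fin (2 * n) → ZMod 2) (y : Fin n → ZMod 2)
    (hx : ∀ p, x p = x (p - pos1 hn) + y (w p)) :
    x = potential w (x (⟨0, by omega⟩ - pos1 hn)) y := by
  funext ⟨k, hk⟩
  induction k with
  | zero =>
    rw [hx]
    simp only [potential]
    rw [partialSum_succ _ ⟨0, hk⟩, partialSum_zero, zero_add]
  | succ k ih =>
    have hs : (⟨k + 1, hk⟩ - pos1 hn : Fin (2 * n)) = ⟨k, by omega⟩ :=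
      Fin.ext (by rw [val_sub_pos1]; simp)
    rw [hx, hs, ih (by omega)]
    simp only [potential]
    rw [partialSum_succ _ ⟨k + 1, hk⟩]
    ring

end Word

/-! ### Dart permutations -/

/-- Reversal of darts. -/
def dartRev (α : Type*) : Equiv.Perm (α × Bool) :=
  Equiv.prodCongr (Equiv.refl α) Equiv.boolNot

@[simp] lemma dartRev_apply {α : Type*} (p : α) (s : Bool) : dartRev α (p, s) = (p, !s) := rfl

section Dart

variable {n : ℕ} {hn : 0 < n} {w : Fin (2 * n) → Fin n} {t : Fin n → Transition}
  {τ : Equiv.Perm (Fin (2 * n) × Bool)}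

lemma sub_add_pos1 (hn : 0 < n) (p : Fin (2 * n)) : ∃ q, p = q - pos1 hn := by
  have : NeZero (2 * n) := ⟨by omega⟩
  exact ⟨p + pos1 hn, by simp⟩

/-- Every dart arrives at one of the two occurrences of some vertex. -/
lemma dart_cases (hn : 0 < n) (hw : DoubleOccurrence w)
    (d : Fin (2 * n) × Bool) : ∃ a b, a ≠ b ∧ w a = w b ∧
      (d = (a - pos1 hn, true) ∨ d = (a, false)) := by
  obtain ⟨p, s⟩ := d
  have key : ∀ q : Fin (2 * n), ∃ b, q ≠ b ∧ w q = w b := by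
    intro q
    obtain ⟨a, b, hab, h⟩ := exists_occurrences hw (w q)
    have hocc := occ_iff h
    rcases (hocc q).1 rfl with rfl | rfl
    · exact ⟨b, hab.ne, ((hocc b).2 (Or.inr rfl)).symm⟩
    · exact ⟨a, hab.ne', ((hocc a).2 (Or.inl rfl)).symm⟩
  cases s
  · obtain ⟨b, h1, h2⟩ := key p
    exact ⟨p, b, h1, h2, Or.inr rfl⟩
  · obtain ⟨q, rfl⟩ := sub_add_pos1 hn p
    obtain ⟨b, h1, h2⟩ := key q
    exact ⟨q, b, h1, h2, Or.inl rfl⟩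

lemma dart_reverse (hw : DoubleOccurrence w) (hτ : IsDartPerm hn w t τ)
    (d : Fin (2 * n) × Bool) : τ (dartRev _ (τ d)) = dartRev _ d := by
  obtain ⟨a, b, hab, h, hd⟩ := dart_cases hn hw d
  obtain ⟨hf, hc, hr⟩ := hτ (w a) a b hab rfl h.symm
  cases ht : t (w a)
  · obtain ⟨h1, h2, h3, h4⟩ := hf ht
    rcases hd with rfl | rfl <;> simp [h1, h3]
  · obtain ⟨h1, h2, h3, h4⟩ := hc ht
    rcases hd with rfl | rfl <;> simp [h1, h2, h3, h4]
  · obtain ⟨h1, h2, h3, h4⟩ := hr ht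
    rcases hd with rfl | rfl <;> simp [h1, h2, h3, h4]

lemma dart_ne_reverse (hw : DoubleOccurrence w) (hτ : IsDartPerm hn w t τ)
    (d : Fin (2 * n) × Bool) : τ d ≠ dartRev _ d := by
  have : NeZero (2 * n) := ⟨by omega⟩
  obtain ⟨a, b, hab, h, hd⟩ := dart_cases hn hw d
  obtain ⟨hf, hc, hr⟩ := hτ (w a) a b hab rfl h.symm
  cases ht : t (w a)
  · obtain ⟨h1, h2, h3, h4⟩ := hf ht
    rcases hd with rfl | rfl <;> simp [h1, h3]
  · obtain ⟨h1, h2, h3, h4⟩ := hc ht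
    rcases hd with rfl | rfl <;> simp [h1, h3]
  · obtain ⟨h1, h2, h3, h4⟩ := hr ht
    rcases hd with rfl | rfl <;> simp [h1, h3, hab.symm]

/-- The condition at a vertex with occurrences `a` and `b` for a function on edges to be constant on
the circuits through it. -/
def VertexCond (hn : 0 < n) (x : Fin (2 * n) → ZMod 2) (s : Transition)
    (a b : Fin (2 * n)) : Prop :=
  match s with
  | .follow => x (a - pos1 hn) = x a ∧ x (b - pos1 hn) = x b
  | .cross => x (a - pos1 hn) = x b ∧ x (b - pos1 hn) = x a
  | .reverse => x (a - pos1 hn) = x (b - pos1 hn) ∧ x a = x b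

lemma invFun_iff (hw : DoubleOccurrence w) (hτ : IsDartPerm hn w t τ)
    (x : Fin (2 * n) → ZMod 2) :
    (fun d : Fin (2 * n) × Bool => x d.1) ∈ invFun τ ↔
      ∀ v a b, a < b → Finset.univ.filter (fun p => w p = v) = {a, b} →
        VertexCond hn x (t v) a b := by
  constructor
  · intro hx v a b hab h
    have hocc := occ_iff h
    obtain ⟨hf, hc, hr⟩ := hτ v a b hab.ne ((hocc a).2 (Or.inl rfl)) ((hocc b).2 (Or.inr rfl))
    have e1 := hx (a - pos1 hn, true)
    have e2 := hx (b - pos1 hn, true)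
    have e3 := hx (a, false)
    cases ht : t v
    · obtain ⟨h1, h2, h3, h4⟩ := hf ht
      simp only [h1, h2] at e1 e2
      exact ⟨e1.symm, e2.symm⟩
    · obtain ⟨h1, h2, h3, h4⟩ := hc ht
      simp only [h1, h2] at e1 e2
      exact ⟨e1.symm, e2.symm⟩
    · obtain ⟨h1, h2, h3, h4⟩ := hr ht
      simp only [h1, h3] at e1 e3
      exact ⟨e1.symm, e3.symm⟩
  · intro hx d
    obtain ⟨a, b, hab, h, hd⟩ := dart_cases hn hw d
    have hV : VertexCond hn x (t (w a)) a b := by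
      obtain ⟨a', b', hab', h'⟩ := exists_occurrences hw (w a)
      have hocc := occ_iff h'
      have hv := hx _ _ _ hab' h'
      rcases (hocc a).1 rfl with h1 | h1 <;> rcases (hocc b).1 h.symm with h2 | h2
      · exact absurd (h1.trans h2.symm) hab
      · rw [h1, h2]; rwa [h1] at hv
      · rw [h1, h2]
        rw [h1] at hv
        revert hv
        cases t (w b') <;> simp only [VertexCond] <;> rintro ⟨h3, h4⟩ <;>
          simp only [h3, h4, and_self]
      · exact absurd (h1.trans h2.symm) hab
    obtain ⟨hf, hc, hr⟩ := hτ (w a) a b hab rfl h.symm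
    cases ht : t (w a)
    · obtain ⟨h1, h2, h3, h4⟩ := hf ht
      rw [ht] at hV
      rcases hd with rfl | rfl <;> simp [h1, h3, hV.1]
    · obtain ⟨h1, h2, h3, h4⟩ := hc ht
      rw [ht] at hV
      rcases hd with rfl | rfl <;> simp [h1, h3, hV.1, hV.2]
    · obtain ⟨h1, h2, h3, h4⟩ := hr ht
      rw [ht] at hV
      rcases hd with rfl | rfl <;> simp [h1, h3, hV.1, hV.2]

/-- The linear condition on the jumps `y` at the vertex `v` imposed by the transition there. -/
def JumpCond (w : Fin (2 * n) → Fin n) (y : Fin n → ZMod 2) (s : Transition) (v : Fin n) :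
    Prop :=
  match s with
  | .follow => y v = 0
  | .cross => ∑ u, interlaceMatrix w v u * y u = 0
  | .reverse => ∑ u, interlaceMatrix w v u * y u + y v = 0

lemma vertexCond_iff (hn : 0 < n) (hw : DoubleOccurrence w) (c : ZMod 2) (y : Fin n → ZMod 2)
    {v : Fin n} {a b : Fin (2 * n)} (hab : a < b)
    (h : Finset.univ.filter (fun p => w p = v) = {a, b}) (s : Transition) :
    VertexCond hn (potential w c y) s a b ↔ JumpCond w y s v := by
  have ha := potential_step hn hw c y a
  have hb := potential_step hn hw c y b
  have h2 := potential_between hw hab h c y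
  rw [(occ_iff h a).2 (Or.inl rfl)] at ha
  rw [(occ_iff h b).2 (Or.inr rfl)] at hb
  revert ha hb h2
  cases s <;> simp only [VertexCond, JumpCond] <;>
    generalize potential w c y a = A <;> generalize potential w c y b = B <;>
    generalize potential w c y (a - pos1 hn) = A' <;>
    generalize potential w c y (b - pos1 hn) = B' <;>
    generalize y v = Y <;> generalize ∑ u, interlaceMatrix w v u * y u = Z <;>
    revert A B A' B' Y Z <;> decide

/-- A function on edges that is constant on circuits jumps by the same amount at both passages
through a vertex. -/
lemma vertexCond_jump (hn : 0 < n) (x : Fin (2 * n) → ZMod 2) (s : Transition)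
    (a b : Fin (2 * n)) (h : VertexCond hn x s a b) :
    x a + x (a - pos1 hn) = x b + x (b - pos1 hn) := by
  revert h
  cases s <;> simp only [VertexCond] <;> rintro ⟨h1, h2⟩ <;> rw [h1, h2] <;>
    simp [add_comm, CharTwo.add_self_eq_zero]

lemma exists_potential (hw : DoubleOccurrence w) (hτ : IsDartPerm hn w t τ)
    (x : Fin (2 * n) → ZMod 2) (hx : (fun d : Fin (2 * n) × Bool => x d.1) ∈ invFun τ) :
    ∃ c y, x = potential w c y := by
  choose a b hab h using exists_occurrences hw
  refine ⟨_, fun v => x (a v) + x (a v - pos1 hn), eq_potential hn x _ fun p => ?_⟩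
  have hj := vertexCond_jump hn x _ _ _ ((invFun_iff hw hτ x).1 hx (w p) _ _ (hab _) (h _))
  have : x (a (w p)) + x (a (w p) - pos1 hn) = x p + x (p - pos1 hn) := by
    rcases (occ_iff (h (w p)) p).1 rfl with hp | hp
    · rw [← hp]
    · rw [hj, ← hp]
  simp only [this]
  rw [add_comm (x p), ← add_assoc, CharTwo.add_self_eq_zero, zero_add]

lemma potential_invFun_iff (hw : DoubleOccurrence w) (hτ : IsDartPerm hn w t τ)
    (c : ZMod 2) (y : Fin n → ZMod 2) :
    (fun d : Fin (2 * n) × Bool => potential w c y d.1) ∈ invFun τ ↔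
      ∀ v, JumpCond w y (t v) v := by
  rw [invFun_iff hw hτ]
  constructor
  · intro hx v
    obtain ⟨a, b, hab, h⟩ := exists_occurrences hw v
    exact (vertexCond_iff hn hw c y hab h _).1 (hx v a b hab h)
  · intro hy v a b hab h
    exact (vertexCond_iff hn hw c y hab h _).2 (hy v)

/-- The space of jump assignments satisfying the linear condition of `t` at every vertex. -/
def jumpSpace (w : Fin (2 * n) → Fin n) (t : Fin n → Transition) :
    Submodule (ZMod 2) (Fin n → ZMod 2) where
  carrier := {y | ∀ v, JumpCond w y (t v) v}
  add_mem' := by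
    intro y z hy hz v
    have h1 := hy v
    have h2 := hz v
    revert h1 h2
    cases t v <;> simp only [JumpCond, Pi.add_apply, mul_add, Finset.sum_add_distrib] <;>
      intro h1 h2
    · rw [h1, h2, add_zero]
    · rw [h1, h2, add_zero]
    · rw [add_add_add_comm, h1, h2, add_zero]
  zero_mem' := by
    intro v
    cases t v <;> simp [JumpCond]
  smul_mem' := by
    intro c y hy v
    have h1 := hy v
    revert h1
    cases t v <;> simp only [JumpCond, Pi.smul_apply, smul_eq_mul, mul_left_comm _ c,
      ← Finset.mul_sum, ← mul_add] <;> intro h1 <;> rw [h1, mul_zero]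

lemma mem_jumpSpace {y : Fin n → ZMod 2} :
    y ∈ jumpSpace w t ↔ ∀ v, JumpCond w y (t v) v := Iff.rfl

/-- The potential, as a linear map to functions on darts. -/
noncomputable def potentialMap (w : Fin (2 * n) → Fin n) (t : Fin n → Transition) :
    (ZMod 2 × jumpSpace w t) →ₗ[ZMod 2] (Fin (2 * n) × Bool → ZMod 2) where
  toFun z d := potential w z.1 z.2.1 d.1
  map_add' := by
    rintro ⟨c, y⟩ ⟨c', y'⟩
    funext d
    simp only [potential, partialSum, Prod.mk_add_mk, Submodule.coe_add, Pi.add_apply]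
    rw [add_add_add_comm, ← Finset.sum_add_distrib]
    congr 1
    refine Finset.sum_congr rfl fun q _ => ?_
    split_ifs <;> simp
  map_smul' := by
    rintro k ⟨c, y⟩
    funext d
    simp [potential, partialSum, mul_add, Finset.mul_sum]

lemma finrank_circuits (hw : DoubleOccurrence w) (hτ : IsDartPerm hn w t τ) :
    Module.finrank (ZMod 2) (invFun τ ⊓ invFun (dartRev _) : Submodule _ _) =
      1 + Module.finrank (ZMod 2) (jumpSpace w t) := by
  have hinj : Function.Injective (potentialMap w t) := by
    rw [← LinearMap.ker_eq_bot, LinearMap.ker_eq_bot']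
    rintro ⟨c, y, hy⟩ h
    have hz : ∀ p, potential w c y p = 0 := fun p => congrFun h (p, true)
    have hy0 : y = 0 := by
      funext v
      obtain ⟨a, b, hab, h⟩ := exists_occurrences hw v
      have := potential_step hn hw c y a
      rw [hz, hz, (occ_iff h a).2 (Or.inl rfl), zero_add] at this
      exact this.symm
    subst hy0
    have hc : c = 0 := by
      have := hz ⟨0, by omega⟩
      simpa [potential, partialSum] using this
    subst hc
    rfl
  have hrange : LinearMap.range (potentialMap w t) = invFun τ ⊓ invFun (dartRev _) := by
    ext f
    constructor
    · rintro ⟨⟨c, y, hy⟩, rfl⟩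
      exact ⟨(potential_invFun_iff hw hτ c y).2 hy, fun d => rfl⟩
    · rintro ⟨hf, hf'⟩
      have hfx : f = fun d => f (d.1, true) := by
        funext ⟨p, s⟩
        cases s
        · exact (hf' (p, false)).symm
        · rfl
      rw [hfx] at hf
      obtain ⟨c, y, hx⟩ := exists_potential hw hτ (fun p => f (p, true)) hf
      have hx' : ∀ p, f (p, true) = potential w c y p := congrFun hx
      simp only [hx'] at hf hfx
      exact ⟨(c, ⟨y, (potential_invFun_iff hw hτ c y).1 hf⟩), hfx.symm⟩
  rw [← hrange, LinearMap.finrank_range_of_inj hinj, Module.finrank_prod, Module.finrank_self]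

lemma orbitCount_dart (hw : DoubleOccurrence w) (hτ : IsDartPerm hn w t τ) :
    orbitCount τ = 2 * (1 + Module.finrank (ZMod 2) (jumpSpace w t)) := by
  have hr : ∀ d, dartRev (Fin (2 * n)) (dartRev _ d) = d := by
    rintro ⟨p, s⟩
    simp
  rw [← finrank_circuits hw hτ]
  refine orbitCount_eq_two_mul τ (dartRev _) hr (dart_reverse hw hτ) fun d => ?_
  refine not_sameCycle_reversal (dart_reverse hw hτ) ?_ (dart_ne_reverse hw hτ) d
  rintro ⟨p, s⟩
  simp

end Dart

/-! ### The kernel of the principal submatrix -/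

lemma nullity_eq_finrank_ker {ι : Type*} [Fintype ι] (M : Matrix ι ι (ZMod 2)) :
    nullity M = Module.finrank (ZMod 2) (LinearMap.ker M.mulVecLin) := by
  have := LinearMap.finrank_range_add_finrank_ker M.mulVecLin
  rw [Module.finrank_fintype_fun_eq_card] at this
  rw [nullity, Matrix.rank]
  omega

/-- Extension by zero identifies the kernel of the principal submatrix on `S` with the admissible
jumps, when `t` follows off `S` and the diagonal entries on `S` record the reversing vertices. -/
lemma finrank_ker_eq {n : ℕ} (w : Fin (2 * n) → Fin n) (t : Fin n → Transition)
    (S : Finset (Fin n)) (m : Fin n → ZMod 2)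
    (hout : ∀ v, v ∉ S → t v = .follow)
    (hin : ∀ v, v ∈ S → (t v = .cross ∧ m v = 0) ∨ (t v = .reverse ∧ m v = 1)) :
    Module.finrank (ZMod 2) (LinearMap.ker ((interlaceMatrix w + Matrix.diagonal m).submatrix
        (fun i : {x // x ∈ S} => (i : Fin n)) (fun j : {x // x ∈ S} => (j : Fin n))).mulVecLin) =
      Module.finrank (ZMod 2) (jumpSpace w t) := by
  set M := (interlaceMatrix w + Matrix.diagonal m).submatrix
        (fun i : {x // x ∈ S} => (i : Fin n)) (fun j : {x // x ∈ S} => (j : Fin n)) with hM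
  let R : jumpSpace w t →ₗ[ZMod 2] ({x // x ∈ S} → ZMod 2) :=
    LinearMap.funLeft (ZMod 2) (ZMod 2) (fun i : {x // x ∈ S} => (i : Fin n)) ∘ₗ
      (jumpSpace w t).subtype
  have hR : ∀ y i, R y i = y.1 i.1 := fun y i => rfl
  have hmul : ∀ (y : Fin n → ZMod 2), (∀ v, v ∉ S → y v = 0) → ∀ i : {x // x ∈ S},
      (M.mulVec (fun j => y j.1)) i =
        ∑ u, interlaceMatrix w i.1 u * y u + m i.1 * y i.1 := by
    intro y hy i
    have h1 : (M.mulVec (fun j => y j.1)) i =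
        ∑ u ∈ S, (interlaceMatrix w + Matrix.diagonal m) i.1 u * y u := by
      rw [← Finset.sum_coe_sort]
      rfl
    rw [h1, Finset.sum_subset (Finset.subset_univ S)
      (fun u _ hu => by rw [hy u hu, mul_zero])]
    simp [Matrix.add_apply, add_mul, Finset.sum_add_distrib, Matrix.diagonal_apply]
  have hcond : ∀ (y : Fin n → ZMod 2) (v : Fin n), v ∈ S →
      (JumpCond w y (t v) v ↔ ∑ u, interlaceMatrix w v u * y u + m v * y v = 0) := by
    intro y v hv
    rcases hin v hv with ⟨h1, h2⟩ | ⟨h1, h2⟩ <;> rw [h1, h2] <;> simp [JumpCond]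
  have hsupp : ∀ y ∈ jumpSpace w t, ∀ v, v ∉ S → y v = 0 := by
    intro y hy v hv
    have := hy v
    rwa [hout v hv] at this
  have hinj : Function.Injective R := by
    intro y z h
    ext v
    by_cases hv : v ∈ S
    · exact congrFun h ⟨v, hv⟩
    · rw [hsupp _ y.2 v hv, hsupp _ z.2 v hv]
  have hrange : LinearMap.range R = LinearMap.ker M.mulVecLin := by
    ext z
    rw [LinearMap.mem_ker, Matrix.mulVecLin_apply]
    constructor
    · rintro ⟨y, rfl⟩
      funext i
      exact (hmul y.1 (hsupp _ y.2) i).trans ((hcond y.1 i.1 i.2).1 (y.2 i.1))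
    · intro hz
      let y : Fin n → ZMod 2 := fun v => if h : v ∈ S then z ⟨v, h⟩ else 0
      have hy0 : ∀ v, v ∉ S → y v = 0 := fun v hv => dif_neg hv
      have hyz : (fun j : {x // x ∈ S} => y j.1) = z := by
        funext j
        exact dif_pos j.2
      refine ⟨⟨y, fun v => ?_⟩, hyz⟩
      by_cases hv : v ∈ S
      · rw [hcond y v hv, ← hmul y hy0 ⟨v, hv⟩, hyz, hz]
        rfl
      · rw [hout v hv]
        exact hy0 v hv
  rw [← hrange, LinearMap.finrank_range_of_inj hinj]

/-- **Nullity interpretation underlying the multivariate interlace polynomial.**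
Let `w` be a double occurrence word on `n ≥ 1` vertices, `ℓ` a loop assignment, `A` and
`B` disjoint sets of vertices, `ℓ'` the loop assignment obtained from `ℓ` by toggling the
loops on `B`, and `M` the principal submatrix of `I(w) + diag(ℓ')` on `A ∪ B`. Let
`t_{A,B}` follow outside `A ∪ B`, reverse at looped vertices of `A` and unlooped vertices
of `B`, and cross at unlooped vertices of `A` and looped vertices of `B`, with
corresponding dart permutation `τ` and circuit partition `P_{t_{A,B}}` of size
`(number of orbits of τ)/2`. Then `ν(M) = |P_{t_{A,B}}| − 1`. -/
theorem multivariate_interlace_nullity {n : ℕ} (hn : 0 < n)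
    (w : Fin (2 * n) → Fin n) (hw : DoubleOccurrence w) (ℓ : Fin n → ZMod 2)
    (A B : Finset (Fin n)) (hAB : Disjoint A B)
    (ℓ' : Fin n → ZMod 2) (hℓ' : ∀ v : Fin n, ℓ' v = if v ∈ B then ℓ v + 1 else ℓ v)
    (t : Fin n → Transition)
    (ht : ∀ v : Fin n, t v =
      if v ∈ A then (if ℓ v = 1 then Transition.reverse else Transition.cross)
      else if v ∈ B then (if ℓ v = 0 then Transition.reverse else Transition.cross)
      else Transition.follow)
    (τ : Equiv.Perm (Fin (2 * n) × Bool)) (hτ : IsDartPerm hn w t τ) :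
    nullity ((interlaceMatrix w + Matrix.diagonal ℓ').submatrix
        (fun i : {x // x ∈ A ∪ B} => (i : Fin n)) (fun j : {x // x ∈ A ∪ B} => (j : Fin n))) =
      orbitCount τ / 2 - 1 := by
  rw [orbitCount_dart hw hτ, Nat.mul_div_cancel_left _ two_pos, Nat.add_sub_cancel_left,
    nullity_eq_finrank_ker]
  have h01 : ∀ z : ZMod 2, z = 0 ∨ z = 1 := by decide
  have hne : (1 : ZMod 2) ≠ 0 := by decide
  refine finrank_ker_eq w t (A ∪ B) ℓ' (fun v hv => ?_) (fun v hv => ?_)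
  · rw [Finset.mem_union, not_or] at hv
    rw [ht, if_neg hv.1, if_neg hv.2]
  · rw [ht, hℓ']
    by_cases hA : v ∈ A
    · have hB : v ∉ B := Finset.disjoint_left.1 hAB hA
      rcases h01 (ℓ v) with h | h <;> simp [hA, hB, h]
    · have hB : v ∈ B := (Finset.mem_union.1 hv).resolve_left hA
      rcases h01 (ℓ v) with h | h <;> simp [hA, hB, h, CharTwo.add_self_eq_zero]
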